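/- arXiv:2110.00805 — 2 statements merged into one kernel-verified Lean document; each statement's English description precedes it below -/
import Mathlib

section
/- Under the paper's hypotheses (q = p^e odd, r ≥ 2 even, nN = q^r - 1, gcd((q^r-1)/(q-1), N) = 2), define Z(a) = (1/q) Σ_{y ∈ F_q} Σ_{x ∈ F_{q^r}} χ(y·Tr_{q^r/q}(a x^N)). If p ≡ 1 mod 4 and a ∈ F_{q^r}^* is a square, then Z(a) = (q^r - (q-1)q^{r/2})/q; if a is a non-square, Z(a) = (q^r + (q-1)q^{r/2})/q. -/
/-- Averages of a function over two finite groups mapping onto the same subgroup agree. -/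
theorem card_mul_sum_comp_of_range_eq {B C G R : Type*} [Group B] [Group C] [Group G]
    [Fintype B] [Fintype C] [CommSemiring R] (φ : B →* G) (ψ : C →* G)
    (h : φ.range = ψ.range) (f : G → R) :
    (Fintype.card C : R) * ∑ b, f (φ b) = Fintype.card B * ∑ c, f (ψ c) := by
  have h₁ : ∀ c, ∑ b, f (φ b * ψ c) = ∑ b, f (φ b) := fun c ↦ by
    obtain ⟨b', hb'⟩ : ψ c ∈ φ.range := h ▸ ⟨c, rfl⟩
    simpa [hb'] using Equiv.sum_comp (Equiv.mulRight b') (fun b ↦ f (φ b))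
  have h₂ : ∀ b, ∑ c, f (φ b * ψ c) = ∑ c, f (ψ c) := fun b ↦ by
    obtain ⟨c', hc'⟩ : φ b ∈ ψ.range := h ▸ ⟨b, rfl⟩
    simpa [hc'] using Equiv.sum_comp (Equiv.mulLeft c') (fun c ↦ f (ψ c))
  have h₃ := Finset.sum_comm (s := Finset.univ) (t := Finset.univ) (f := fun b c ↦ f (φ b * ψ c))
  simpa [h₁, h₂] using h₃.symm

theorem sum_eq_zero_add_sum_units {F R : Type*} [Field F] [Fintype F] [DecidableEq F]
    [AddCommMonoid R] (g : F → R) : ∑ x, g x = g 0 + ∑ u : Fˣ, g u := by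
  rw [← Finset.add_sum_erase _ _ (Finset.mem_univ (0 : F)),
    ← Equiv.sum_comp unitsEquivNeZero.symm, Finset.sum_subtype]
  · rfl
  · simp

/-- If the norm exponent and `N` have gcd `2`, the products `y * x ^ N` with `y ∈ Kˣ`, `x ∈ Fˣ`
are equidistributed over the nonzero squares of `F`. -/
theorem sum_units_mul_pow {K F R : Type*} [Field K] [Field F] [Fintype K] [Fintype F]
    [DecidableEq K] [DecidableEq F]
    [Algebra K F] [CommSemiring R] [CharZero R] [IsCancelMulZero R] (N : ℕ)
    (h : Nat.gcd ((Nat.card F - 1) / (Nat.card K - 1)) N = 2) (f : F → R) :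
    ∑ y : Kˣ, ∑ x : Fˣ, f (algebraMap K F y * (x : F) ^ N) =
      Fintype.card Kˣ * ∑ s : Fˣ, f ((s : F) ^ 2) := by
  set D := (Nat.card F - 1) / (Nat.card K - 1) with hD
  let i : Kˣ →* Fˣ := Units.map (algebraMap K F)
  let φ : Kˣ × Fˣ →* Fˣ := MonoidHom.coprod i (powMonoidHom N)
  have hi : ∀ u : Fˣ, i (Units.map (Algebra.norm K) u) = u ^ D := fun u ↦ by
    ext
    simp [i, FiniteField.algebraMap_norm_eq_pow, hD]
  have hr : φ.range = (powMonoidHom 2 : Fˣ →* Fˣ).range := by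
    apply le_antisymm
    · rintro _ ⟨⟨y, x⟩, rfl⟩
      obtain ⟨u, rfl⟩ := FiniteField.unitsMap_norm_surjective K F y
      obtain ⟨d, hd⟩ : 2 ∣ D := h ▸ Nat.gcd_dvd_left D N
      obtain ⟨m, hm⟩ : 2 ∣ N := h ▸ Nat.gcd_dvd_right D N
      refine ⟨u ^ d * x ^ m, ?_⟩
      simp only [φ, MonoidHom.coprod_apply, hi, powMonoidHom_apply]
      rw [hd, hm, mul_pow, ← pow_mul, ← pow_mul, mul_comm d, mul_comm m]
    · rintro _ ⟨s, rfl⟩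
      refine ⟨(Units.map (Algebra.norm K) (s ^ Nat.gcdA D N), s ^ Nat.gcdB D N), ?_⟩
      simp only [φ, MonoidHom.coprod_apply, hi, powMonoidHom_apply]
      have hb := Nat.gcd_eq_gcd_ab D N
      rw [h] at hb
      rw [← zpow_natCast, ← zpow_natCast, ← zpow_natCast, ← zpow_mul, ← zpow_mul, ← zpow_add,
        mul_comm _ (D : ℤ), mul_comm _ (N : ℤ), ← hb]
  have key := card_mul_sum_comp_of_range_eq φ _ hr (fun u ↦ f u)
  rw [Fintype.card_prod, Nat.cast_mul, mul_comm (Fintype.card Kˣ : R), mul_assoc] at key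
  have := mul_left_cancel₀ (Nat.cast_ne_zero.mpr Fintype.card_ne_zero) key
  simpa [Fintype.sum_prod_type, φ, i] using this

section QuadraticExtension

variable {L F : Type*} [Field L] [Field F] [Fintype L] [Fintype F] [Algebra L F]

/-- Over a quadratic extension of a field with `Q ≡ 1 (mod 4)` elements, a nonzero square has
nonzero trace. -/
theorem eq_zero_of_trace_sq_eq_zero (hF : Fintype.card F = Fintype.card L ^ 2)
    (hL : Fintype.card L % 4 = 1) {x : F} (hx : Algebra.trace L F (x ^ 2) = 0) : x = 0 := by
  have hfin : Module.finrank L F = 2 := by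
    have := Module.card_eq_pow_finrank (K := L) (V := F)
    exact Nat.pow_right_injective Fintype.one_lt_card (this.symm.trans hF)
  have hsum := FiniteField.algebraMap_trace_eq_sum_pow L F (x ^ 2)
  rw [hx, map_zero, hfin, Nat.card_eq_fintype_card] at hsum
  simp only [Finset.sum_range_succ, Finset.sum_range_zero, zero_add, pow_zero, pow_one] at hsum
  by_contra hx0
  obtain ⟨k, hk⟩ : ∃ k, Fintype.card L = 4 * k + 1 := ⟨Fintype.card L / 4, by omega⟩
  have hk0 : k ≠ 0 := by
    rintro rfl
    have := Fintype.one_lt_card (α := L)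
    omega
  have h1 : x ^ (8 * k) = -1 := by
    have : x ^ 2 * (x ^ (8 * k) + 1) = 0 := by
      rw [hsum, hk]; ring
    exact eq_neg_of_add_eq_zero_left ((mul_eq_zero.mp this).resolve_left (pow_ne_zero 2 hx0))
  have h2 : x ^ (Fintype.card F - 1) = 1 := FiniteField.pow_card_sub_one_eq_one x hx0
  have h3 : Fintype.card F - 1 = 8 * k * (2 * k + 1) := by
    rw [hF, hk]
    have : (4 * k + 1) ^ 2 = 8 * k * (2 * k + 1) + 1 := by ring
    omega
  rw [h3, pow_mul, h1, Odd.neg_one_pow ⟨k, rfl⟩] at h2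
  have hchar : ringChar F ≠ 2 := by
    intro h
    have h4 := FiniteField.even_card_iff_char_two.mp h
    have h5 := Fintype.card_pos (α := F)
    rw [mul_assoc] at h3
    generalize k * (2 * k + 1) = j at h3
    omega
  exact Ring.neg_one_ne_one_of_char_ne_two hchar h2

theorem sum_addChar_trace_sq (hF : Fintype.card F = Fintype.card L ^ 2)
    (hL : Fintype.card L % 4 = 1) {ψ : AddChar L ℂ} (hψ : ψ ≠ 1) :
    ∑ x : F, ψ (Algebra.trace L F (x ^ 2)) = -(Fintype.card L : ℂ) := by
  classical
  set S := ∑ x : F, ψ (Algebra.trace L F (x ^ 2)) with hS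
  have hscale : ∀ l : L, l ≠ 0 → ∑ x : F, ψ (l * Algebra.trace L F (x ^ 2)) = S := by
    intro l hl
    obtain ⟨u, hu⟩ := FiniteField.norm_surjective L F l
    have hu0 : u ≠ 0 := by
      rintro rfl
      exact hl (by rw [← hu, Algebra.norm_zero])
    have hl2 : algebraMap L F l = (u ^ ((Fintype.card L + 1) / 2)) ^ 2 := by
      rw [← hu, FiniteField.algebraMap_norm_eq_pow, ← pow_mul, Nat.card_eq_fintype_card,
        Nat.card_eq_fintype_card, hF]
      congr 1
      rw [Nat.div_mul_cancel (by omega)]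
      have := Fintype.one_lt_card (α := L)
      apply Nat.div_eq_of_eq_mul_left (by omega)
      simpa using Nat.sq_sub_sq (Fintype.card L) 1
    refine Eq.trans (Finset.sum_congr rfl fun x _ ↦ ?_)
      (Equiv.sum_comp (Equiv.mulLeft₀ (u ^ ((Fintype.card L + 1) / 2)) (pow_ne_zero _ hu0))
        fun x ↦ ψ (Algebra.trace L F (x ^ 2)))
    rw [Equiv.mulLeft₀_apply, mul_pow, ← hl2, ← Algebra.smul_def, map_smul, smul_eq_mul]
  have h1 : ∑ l : L, ∑ x : F, ψ (l * Algebra.trace L F (x ^ 2)) =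
      (Fintype.card L : ℂ) ^ 2 + (Fintype.card L - 1) * S := by
    rw [← Finset.add_sum_erase _ _ (Finset.mem_univ (0 : L)),
      Finset.sum_congr rfl fun l hl ↦ hscale l (Finset.ne_of_mem_erase hl), Finset.sum_const,
      Finset.card_erase_of_mem (Finset.mem_univ _), Finset.card_univ, nsmul_eq_mul,
      Nat.cast_sub Fintype.card_pos]
    simp [hF]
  have h2 : ∑ l : L, ∑ x : F, ψ (l * Algebra.trace L F (x ^ 2)) = Fintype.card L := by
    rw [Finset.sum_comm]
    simp_rw [AddChar.sum_mulShift _ (AddChar.IsPrimitive.of_ne_one hψ)]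
    rw [Finset.sum_eq_single 0]
    · simp
    · intro x _ hx
      rw [if_neg (mt (eq_zero_of_trace_sq_eq_zero hF hL) hx), Nat.cast_zero]
    · simp
  have hL1 : (Fintype.card L : ℂ) - 1 ≠ 0 := by
    rw [sub_ne_zero]
    exact_mod_cast Fintype.one_lt_card.ne'
  apply mul_left_cancel₀ hL1
  linear_combination h2 - h1

end QuadraticExtension

/-- Scaling by a nonsquare negates the quadratic exponential sum. -/
theorem sum_addChar_nonsquare_mul_sq {F R : Type*} [Field F] [Fintype F] [CommRing R] [IsDomain R]
    [CharZero R] (hF : ringChar F ≠ 2) {ψ : AddChar F R} (hψ : ψ ≠ 1) {a : F}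
    (ha : ¬ IsSquare a) :
    ∑ x : F, ψ (a * x ^ 2) = -∑ x : F, ψ (x ^ 2) := by
  classical
  have ha0 : a ≠ 0 := by
    rintro rfl
    exact ha IsSquare.zero
  have hsq : ∀ g : F → R, ∑ x : F, g (x ^ 2) =
      ∑ t : F, ((quadraticChar F t + 1 : ℤ) : R) * g t := by
    intro g
    rw [← Finset.sum_fiberwise' Finset.univ (fun x : F ↦ x ^ 2) g]
    refine Finset.sum_congr rfl fun t _ ↦ ?_
    rw [Finset.sum_const, nsmul_eq_mul, ← quadraticChar_card_sqrts hF t]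
    congr
    simp
  rw [hsq ψ, hsq fun t ↦ ψ (a * t), ← Equiv.sum_comp (Equiv.mulLeft₀ a ha0)
    fun t ↦ ((quadraticChar F t + 1 : ℤ) : R) * ψ t, eq_neg_iff_add_eq_zero,
    ← Finset.sum_add_distrib]
  have h : ∑ x, ψ (a * x) = 0 :=
    (Equiv.sum_comp (Equiv.mulLeft₀ a ha0) ψ).trans (AddChar.sum_eq_zero_of_ne_one hψ)
  calc _ = ∑ x, 2 * ψ (a * x) := by
        refine Finset.sum_congr rfl fun x _ ↦ ?_
        rw [Equiv.mulLeft₀_apply, map_mul (quadraticChar F),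
          quadraticChar_neg_one_iff_not_isSquare.mpr ha]
        push_cast
        ring
    _ = 0 := by rw [← Finset.mul_sum, h, mul_zero]

/-- The quadratic exponential sum for the standard character of `𝔽_{p^{2m}}`,
`p ^ m ≡ 1 (mod 4)`. -/
theorem sum_stdAddChar_trace_sq {p m : ℕ} [Fact p.Prime] (hm : m ≠ 0) (hpm : p ^ m % 4 = 1)
    {F : Type*} [Field F] [Fintype F] [Algebra (ZMod p) F] (hF : Fintype.card F = (p ^ m) ^ 2) :
    ∑ x : F, ZMod.stdAddChar (Algebra.trace (ZMod p) F (x ^ 2)) = -((p : ℂ) ^ m) := by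
  have : Fintype (GaloisField p m) := Fintype.ofFinite _
  have hL : Fintype.card (GaloisField p m) = p ^ m := by
    rw [← Nat.card_eq_fintype_card, GaloisField.card p m hm]
  have hfin : Module.finrank (ZMod p) F = m * 2 := by
    apply Nat.pow_right_injective (Fact.out (p := p.Prime)).two_le
    simp only
    rw [FiniteField.pow_finrank_eq_card, hF, pow_mul]
  obtain ⟨i⟩ := FiniteField.nonempty_algHom_of_finrank_dvd (F := ZMod p) (K := GaloisField p m)
    (L := F) (by rw [GaloisField.finrank p hm, hfin]; exact dvd_mul_right m 2)
  let := i.toRingHom.toAlgebra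
  have : IsScalarTower (ZMod p) (GaloisField p m) F := IsScalarTower.of_algHom i
  let ψ : AddChar (GaloisField p m) ℂ :=
    ZMod.stdAddChar.compAddMonoidHom (Algebra.trace (ZMod p) (GaloisField p m)).toAddMonoidHom
  have hψ : ψ ≠ 1 := by
    obtain ⟨x, hx⟩ := Algebra.trace_surjective (ZMod p) (GaloisField p m) 1
    refine AddChar.ne_one_iff.mpr ⟨x, fun h ↦ one_ne_zero (α := ZMod p) ?_⟩
    apply ZMod.injective_stdAddChar
    simpa [ψ, hx] using h
  have key := sum_addChar_trace_sq (L := GaloisField p m) (F := F) (by rw [hF, hL])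
    (by rw [hL, hpm]) hψ
  simpa [ψ, hL, Algebra.trace_trace] using key

theorem exp_trace_mul_trace {p : ℕ} [Fact p.Prime] {K F : Type*} [Field K] [Field F] [Finite F]
    [Algebra (ZMod p) K] [Algebra K F] [Algebra (ZMod p) F] (y : K) (x : F) :
    Complex.exp (2 * Real.pi * Complex.I *
      ((Algebra.trace (ZMod p) K (y * Algebra.trace K F x)).val : ℂ) / p) =
      ZMod.stdAddChar (Algebra.trace (ZMod p) F (algebraMap K F y * x)) := by
  have : IsScalarTower (ZMod p) K F := IsScalarTower.of_algebraMap_eq' (Subsingleton.elim _ _)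
  have : Finite K := Finite.of_injective _ (algebraMap K F).injective
  rw [← ZMod.toCircle_apply, ← ZMod.stdAddChar_apply, ← smul_eq_mul, ← map_smul,
    Algebra.trace_trace, Algebra.smul_def]


open Complex in
/-- Eq. (4.7)/(4.8) for `p ≡ 1 (mod 4)`: with
`Z(a) = q⁻¹ ∑_{y ∈ F_q} ∑_{x ∈ F_{q^r}} χ(y · Tr_{q^r/q}(a x^N))`,
if `a` is a nonzero square then `Z(a) = (q^r - (q-1) q^{r/2})/q`, and if `a` is a
non-square then `Z(a) = (q^r + (q-1) q^{r/2})/q`. -/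
theorem Z_value_p1mod4 (p e q r N n : ℕ) (hp : p.Prime) (hpodd : Odd p)
    (hp4 : p % 4 = 1) (he : 0 < e) (hqe : q = p ^ e)
    (hr : 2 ≤ r) (hre : Even r) (hN : 0 < N) (hn : 0 < n)
    (hnN : n * N = q ^ r - 1)
    (hgcd : Nat.gcd ((q ^ r - 1) / (q - 1)) N = 2)
    (F : Type*) [Field F] [Fintype F] (hF : Fintype.card F = q ^ r)
    (K : Subfield F) (hK : Nat.card K = q) [Fintype ↥K] [Algebra (ZMod p) ↥K]
    (a : F) (ha : a ≠ 0) :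
    ∀ Z : ℂ,
      Z = (1 / (q : ℂ)) * ∑ y : ↥K, ∑ x : F,
        Complex.exp (2 * Real.pi * Complex.I *
          ((Algebra.trace (ZMod p) ↥K (y * Algebra.trace ↥K F (a * x ^ N))).val : ℂ) / p) →
      (IsSquare a → Z = ((q : ℂ) ^ r - ((q : ℂ) - 1) * (q : ℂ) ^ (r / 2)) / q) ∧
      (¬ IsSquare a → Z = ((q : ℂ) ^ r + ((q : ℂ) - 1) * (q : ℂ) ^ (r / 2)) / q) := by
  rintro Z rfl
  classical
  have : Fact p.Prime := ⟨hp⟩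
  have : CharP K p := charP_of_injective_algebraMap (algebraMap (ZMod p) K).injective p
  have : CharP F p := charP_of_injective_algebraMap (algebraMap K F).injective p
  let := ZMod.algebra F p
  obtain ⟨k, rfl⟩ := hre.two_dvd
  have hp2 : ringChar F ≠ 2 := by
    rw [ringChar.eq F p]
    rintro rfl
    omega
  have hq : (q : ℂ) ≠ 0 := by
    rw [hqe]
    exact_mod_cast pow_ne_zero e hp.ne_zero
  have hKq : Fintype.card K = q := by rw [← hK, Nat.card_eq_fintype_card]
  let ψ : AddChar F ℂ :=
    ZMod.stdAddChar.compAddMonoidHom (Algebra.trace (ZMod p) F).toAddMonoidHom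
  have hψ : ψ ≠ 1 := by
    obtain ⟨x, hx⟩ := Algebra.trace_surjective (ZMod p) F 1
    refine AddChar.ne_one_iff.mpr ⟨x, fun h ↦ one_ne_zero (α := ZMod p) ?_⟩
    apply ZMod.injective_stdAddChar
    simpa [ψ, hx] using h
  have hexp : ∀ (y : K) (x : F), Complex.exp (2 * Real.pi * Complex.I *
      ((Algebra.trace (ZMod p) K (y * Algebra.trace K F (a * x ^ N))).val : ℂ) / p) =
      ψ (a * (algebraMap K F y * x ^ N)) := by
    intro y x
    rw [exp_trace_mul_trace, mul_left_comm]
    rfl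
  simp_rw [hexp]
  set S := ∑ x : F, ψ (a * x ^ 2) with hS
  have hsplit : ∀ g : F → ℂ, ∑ x, g x = g 0 + ∑ u : Fˣ, g u := fun g ↦
    sum_eq_zero_add_sum_units g
  have hunits : (Fintype.card Kˣ : ℂ) = q - 1 := by
    rw [Fintype.card_units, hKq, Nat.cast_sub (hKq ▸ Fintype.card_pos), Nat.cast_one]
  have hFunits : (Fintype.card Fˣ : ℂ) = q ^ (2 * k) - 1 := by
    rw [Fintype.card_units, Nat.cast_sub Fintype.card_pos, hF, Nat.cast_pow, Nat.cast_one]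
  have hsum : ∑ y : K, ∑ x : F, ψ (a * (algebraMap K F y * x ^ N)) =
      (q : ℂ) ^ (2 * k) + (q - 1) * S := by
    have h := sum_units_mul_pow (K := K) (F := F) N
      (by rw [hK, Nat.card_eq_fintype_card, hF, hgcd]) (fun x ↦ ψ (a * x))
    rw [sum_eq_zero_add_sum_units (fun y : K ↦ ∑ x : F, ψ (a * (algebraMap K F y * x ^ N)))]
    simp_rw [hS, hsplit, zero_pow hN.ne', Finset.sum_add_distrib, h]
    rw [hunits]
    simp only [mul_zero, AddChar.map_zero_eq_one, Finset.sum_const, Finset.card_univ, hunits,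
      hFunits, nsmul_eq_mul, zero_pow two_ne_zero, map_zero, zero_mul]
    ring
  have hS1 : ∑ x : F, ψ (x ^ 2) = -((q : ℂ) ^ k) := by
    have hpm : p ^ (e * k) % 4 = 1 := by
      simp [Nat.pow_mod, hp4]
    have h := sum_stdAddChar_trace_sq (p := p) (m := e * k) (F := F)
      (mul_ne_zero he.ne' (by omega)) hpm (by rw [hF, hqe]; ring)
    rw [hqe, Nat.cast_pow, ← pow_mul]
    exact h
  rw [hsum, Nat.mul_div_cancel_left k two_pos]
  constructor
  · rintro ⟨b, rfl⟩
    have hb : b ≠ 0 := left_ne_zero_of_mul ha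
    have : S = -((q : ℂ) ^ k) := by
      rw [← hS1, ← Equiv.sum_comp (Equiv.mulLeft₀ b hb)]
      refine Finset.sum_congr rfl fun x _ ↦ ?_
      rw [Equiv.mulLeft₀_apply, mul_pow, sq b]
    rw [this]
    ring
  · intro hns
    rw [hS, sum_addChar_nonsquare_mul_sq hp2 hψ hns, hS1]
    ring
end

section
/- Under the paper's hypotheses with p ≡ 1 mod 4 and a ∈ F_{q^r}^* a square, the Hamming weight of the length-n codeword c(a) = (Tr(a η^{jN}))_{j=0}^{n-1} equals (1/N)(q^r - (q^r - (q-1)q^{r/2})/q), and if a is a non-square it equals (1/N)(q^r - (q^r + (q-1)q^{r/2})/q). -/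
open Classical in
/-- The indicator of the elements of `F` with nonzero trace to `K`. -/
noncomputable def traceIndicator (K F : Type*) [Field K] [Field F] [Algebra K F] (x : F) : ℤ :=
  if Algebra.trace K F x = 0 then 0 else 1

section FiniteFieldSums

variable {F : Type*} [Field F] [Fintype F]

theorem sum_units_eq_sum [DecidableEq F] {M : Type*} [AddCommMonoid M] (f : F → M) (h0 : f 0 = 0) :
    ∑ u : Fˣ, f u = ∑ x : F, f x := by
  rw [Fintype.sum_eq_add_sum_subtype_ne f 0, h0, zero_add]
  exact Fintype.sum_equiv unitsEquivNeZero _ _ fun u => rfl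

/-- Over a field of odd characteristic, `v ↦ v ^ 2` and `v ↦ a * v ^ 2` with `a` a non-square
together cover every element twice. -/
theorem sum_sq_add_sum_mul_sq (h2 : ringChar F ≠ 2) (g : F → ℤ) {a : F} (ha : ¬ IsSquare a) :
    ∑ v : F, g (v ^ 2) + ∑ v : F, g (a * v ^ 2) = 2 * ∑ x : F, g x := by
  classical
  have ha0 : a ≠ 0 := by rintro rfl; exact ha (IsSquare.zero)
  have key (g : F → ℤ) : ∑ v : F, g (v ^ 2) = ∑ x : F, (quadraticChar F x + 1) * g x := by
    rw [← Finset.sum_fiberwise_of_maps_to (t := Finset.univ) (g := fun v : F => v ^ 2)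
      (fun _ _ => Finset.mem_univ _)]
    refine Finset.sum_congr rfl fun x _ => ?_
    rw [← quadraticChar_card_sqrts h2 x, Finset.sum_congr rfl
      (fun v hv => by rw [(Finset.mem_filter.1 hv).2] : ∀ v ∈ _, _ = g x)]
    rw [Finset.sum_const, nsmul_eq_mul]
    congr 3
    ext; simp
  have hχ : quadraticChar F a = -1 := quadraticChar_neg_one_iff_not_isSquare.2 ha
  have h1 : ∑ x : F, (quadraticChar F x + 1) * g (a * x) =
      ∑ x : F, (1 - quadraticChar F x) * g x := by
    refine Fintype.sum_equiv (Equiv.mulLeft₀ a ha0) _ _ fun x => ?_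
    rw [Equiv.mulLeft₀_apply, map_mul, hχ]
    ring
  rw [key g, key fun x => g (a * x), h1, ← Finset.sum_add_distrib, Finset.mul_sum]
  exact Finset.sum_congr rfl fun x _ => by ring

end FiniteFieldSums

section Trace

variable {K F : Type*} [Field K] [Field F] [Algebra K F]

@[simp]
theorem traceIndicator_zero : traceIndicator K F 0 = 0 := by simp [traceIndicator]

theorem traceIndicator_congr {K' F' : Type*} [Field K'] [Field F'] [Algebra K' F'] {x : F} {y : F'}
    (h : Algebra.trace K F x = 0 ↔ Algebra.trace K' F' y = 0) :
    traceIndicator K F x = traceIndicator K' F' y := by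
  unfold traceIndicator
  split_ifs <;> simp_all

theorem traceIndicator_algebraMap_mul {c : K} (hc : c ≠ 0) (x : F) :
    traceIndicator K F (algebraMap K F c * x) = traceIndicator K F x :=
  traceIndicator_congr (by simp [← Algebra.smul_def, hc])

variable [Fintype F]

theorem card_mul_sum_traceIndicator :
    (Nat.card K : ℤ) * ∑ x : F, traceIndicator K F x = Nat.card F * (Nat.card K - 1) := by
  classical
  have : Finite K := Finite.of_injective _ (algebraMap K F).injective
  have hs : Function.Surjective (Algebra.trace K F) := Algebra.trace_surjective K F
  have hc :=
    (LinearMap.ker (Algebra.trace K F)).toAddSubgroup.card_eq_card_quotient_mul_card_addSubgroup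
  have hq : Nat.card (F ⧸ (LinearMap.ker (Algebra.trace K F)).toAddSubgroup) = Nat.card K :=
    Nat.card_congr ((Algebra.trace K F).quotKerEquivOfSurjective hs).toEquiv
  rw [hq] at hc
  have hk : Nat.card (LinearMap.ker (Algebra.trace K F)).toAddSubgroup =
      (Finset.univ.filter fun x : F => Algebra.trace K F x = 0).card := by
    rw [← Fintype.card_subtype, ← Nat.card_eq_fintype_card]
    rfl
  have hsum : ∑ x : F, traceIndicator K F x =
      Nat.card F - (Finset.univ.filter fun x : F => Algebra.trace K F x = 0).card := by
    have : ∀ x : F, traceIndicator K F x = 1 - if Algebra.trace K F x = 0 then 1 else 0 := by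
      intro x; unfold traceIndicator; split_ifs <;> simp
    rw [Finset.sum_congr rfl fun x _ => this x, Finset.sum_sub_distrib, Finset.sum_boole]
    simp
  rw [hk] at hc
  rw [hsum]
  have hc' : (Nat.card F : ℤ) = Nat.card K *
    (Finset.univ.filter fun x : F => Algebra.trace K F x = 0).card := by exact_mod_cast hc
  linear_combination hc'

/-- If `gcd ([Fˣ : Kˣ], N) = 2`, replacing `N`-th powers by squares does not change sums of the
trace indicator. -/
theorem sum_traceIndicator_mul_pow {N : ℕ}
    (hgcd : Nat.gcd ((Nat.card F - 1) / (Nat.card K - 1)) N = 2) (a : F) [Fintype Fˣ] :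
    ∑ u : Fˣ, traceIndicator K F (a * u ^ N) = ∑ v : Fˣ, traceIndicator K F (a * v ^ 2) := by
  have : Finite K := Finite.of_injective _ (algebraMap K F).injective
  set M := (Nat.card F - 1) / (Nat.card K - 1) with hM
  obtain ⟨m, hm⟩ : 2 ∣ N := hgcd ▸ Nat.gcd_dvd_right M N
  have h1 (v : Fˣ) : ∑ u : Fˣ, traceIndicator K F (a * v ^ 2 * u ^ N) =
      ∑ u : Fˣ, traceIndicator K F (a * u ^ N) := by
    have hb : (2 : ℤ) = M * Nat.gcdA M N + N * Nat.gcdB M N := by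
      rw [← Nat.gcd_eq_gcd_ab, hgcd]; rfl
    set c : Kˣ := Units.map (Algebra.norm K) v ^ Nat.gcdA M N
    set w : Fˣ := v ^ Nat.gcdB M N
    have hn : Units.map (algebraMap K F : K →* F) (Units.map (Algebra.norm K) v) = v ^ M := by
      ext
      simp [FiniteField.algebraMap_norm_eq_pow, hM]
    have hv : v ^ 2 = Units.map (algebraMap K F : K →* F) c * w ^ N := by
      rw [map_zpow, hn, ← zpow_natCast, ← zpow_natCast, ← zpow_natCast, ← zpow_mul, ← zpow_mul,
        ← zpow_add, Nat.cast_ofNat, hb, mul_comm (Nat.gcdB M N)]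
    have hv' : (v : F) ^ 2 = algebraMap K F c * (w : F) ^ N := by
      have := congrArg Units.val hv
      simpa using this
    refine Fintype.sum_equiv (Equiv.mulLeft w) _ _ fun u => ?_
    rw [hv', ← traceIndicator_algebraMap_mul c.ne_zero (a * _)]
    congr 1
    simp only [Equiv.coe_mulLeft, Units.val_mul]
    ring
  have h2 (u : Fˣ) : ∑ v : Fˣ, traceIndicator K F (a * v ^ 2 * u ^ N) =
      ∑ v : Fˣ, traceIndicator K F (a * v ^ 2) := by
    refine Fintype.sum_equiv (Equiv.mulLeft (u ^ m)) _ _ fun v => ?_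
    congr 1
    simp only [Equiv.coe_mulLeft, Units.val_mul, Units.val_pow_eq_pow_val, hm]
    ring
  have h3 := Finset.sum_comm (s := Finset.univ) (t := Finset.univ)
    (f := fun v u : Fˣ => traceIndicator K F (a * v ^ 2 * u ^ N))
  simp only [h1, h2, Finset.sum_const, nsmul_eq_mul] at h3
  exact mul_left_cancel₀ (by simp) h3

end Trace

section Quadratic

variable {K L F : Type*} [Field K] [Field L] [Field F] [Algebra K L] [Algebra L F] [Fintype F]

theorem card_eq_sq_of_finrank_eq_two (h : Module.finrank L F = 2) :
    Nat.card F = Nat.card L ^ 2 := by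
  rw [Module.natCard_eq_pow_finrank (K := L) (V := F), h]

/-- In a quadratic extension of a field with `Q ≡ 1 (mod 4)` elements, nonzero elements of trace
zero are non-squares. -/
theorem trace_sq_ne_zero (h : Module.finrank L F = 2) (hQ : Nat.card L % 4 = 1)
    {y : F} (hy : y ≠ 0) : Algebra.trace L F (y ^ 2) ≠ 0 := by
  have : Finite L := Finite.of_injective _ (algebraMap L F).injective
  have hcard := card_eq_sq_of_finrank_eq_two h
  have h2 : (2 : F) ≠ 0 := by
    intro h0
    have h5 : (Nat.card F : F) = 0 := by simp
    obtain ⟨k, hk⟩ : ∃ k, Nat.card L = 2 * k + 1 := ⟨Nat.card L / 2, by omega⟩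
    rw [hcard, hk] at h5
    push_cast at h5
    simp [h0] at h5
  intro ht
  have hs := FiniteField.algebraMap_trace_eq_sum_pow L F (y ^ 2)
  rw [ht, h, map_zero] at hs
  simp only [Finset.sum_range_succ, Finset.sum_range_zero, pow_zero, pow_one, zero_add] at hs
  obtain ⟨k, hk⟩ : ∃ k, Nat.card L = 4 * k + 1 := ⟨Nat.card L / 4, by omega⟩
  have e1 : y ^ (8 * k) = -1 := by
    have : y ^ 2 * (1 + y ^ (8 * k)) = 0 := by
      rw [hs, hk]; ring
    have := (mul_eq_zero.1 this).resolve_left (pow_ne_zero 2 hy)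
    linear_combination this
  have e2 : y ^ (8 * k * (2 * k + 1)) = 1 := by
    have := FiniteField.pow_card_sub_one_eq_one y hy
    rw [← Nat.card_eq_fintype_card, hcard, hk] at this
    rw [← this]
    congr 1
    have : (4 * k + 1) ^ 2 = 8 * k * (2 * k + 1) + 1 := by ring
    omega
  rw [pow_mul, e1, Odd.neg_one_pow ⟨k, rfl⟩] at e2
  exact h2 (by linear_combination -e2)

/-- Nonzero elements of a subfield of index two are squares. -/
theorem isSquare_algebraMap_of_finrank_eq_two (h : Module.finrank L F = 2)
    (hQ : Nat.card L % 4 = 1) (c : L) : IsSquare (algebraMap L F c) := by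
  have : Finite L := Finite.of_injective _ (algebraMap L F).injective
  have := Fintype.ofFinite L
  have hcard := card_eq_sq_of_finrank_eq_two h
  by_cases hc : c = 0
  · simp [hc]
  have h2 : ringChar F ≠ 2 := by
    rw [Ne, FiniteField.even_card_iff_char_two, ← Nat.card_eq_fintype_card, hcard, Nat.pow_mod]
    have : Nat.card L % 2 = 1 := by omega
    rw [this]
    decide
  rw [FiniteField.isSquare_iff h2 (by simpa using hc), ← map_pow]
  obtain ⟨k, hk⟩ : ∃ k, Nat.card L = 4 * k + 1 := ⟨Nat.card L / 4, by omega⟩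
  have e := FiniteField.pow_card_sub_one_eq_one c hc
  rw [← Nat.card_eq_fintype_card, hk] at e
  have : Fintype.card F / 2 = (4 * k + 1 - 1) * (2 * k + 1) := by
    rw [← Nat.card_eq_fintype_card, hcard, hk]
    have : (4 * k + 1) ^ 2 = 2 * (4 * k * (2 * k + 1)) + 1 := by ring
    simp only [Nat.add_sub_cancel]
    omega
  rw [this, pow_mul, e, one_pow, map_one]

variable [Algebra K F] [IsScalarTower K L F]

theorem sum_traceIndicator_sq (h : Module.finrank L F = 2) (hQ : Nat.card L % 4 = 1) :
    (Nat.card K : ℤ) * ∑ v : F, traceIndicator K F (v ^ 2) =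
      Nat.card L * (Nat.card L + 1) * (Nat.card K - 1) := by
  classical
  have : Finite L := Finite.of_injective _ (algebraMap L F).injective
  have := Fintype.ofFinite L
  have hcard := card_eq_sq_of_finrank_eq_two h
  have h1 (c : Lˣ) : ∑ v : Fˣ, traceIndicator K F (algebraMap L F c * v ^ 2) =
      ∑ v : Fˣ, traceIndicator K F (v ^ 2) := by
    obtain ⟨d, hd⟩ := isSquare_algebraMap_of_finrank_eq_two (F := F) h hQ (c : L)
    have hd0 : d ≠ 0 := by
      rintro rfl
      simp at hd
    refine Fintype.sum_equiv (Equiv.mulLeft (Units.mk0 d hd0)) _ _ fun v => ?_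
    rw [hd]
    congr 1
    simp only [Equiv.coe_mulLeft, Units.val_mul, Units.val_mk0]
    ring
  have h2 (v : Fˣ) : ∑ c : Lˣ, traceIndicator K F (algebraMap L F c * v ^ 2) =
      ∑ c : L, traceIndicator K L c := by
    rw [← sum_units_eq_sum _ traceIndicator_zero]
    refine Fintype.sum_equiv (Equiv.mulRight
      (Units.mk0 _ (trace_sq_ne_zero h hQ v.ne_zero))) _ _ fun c => ?_
    refine traceIndicator_congr ?_
    rw [← Algebra.trace_trace (S := L), ← Algebra.smul_def, map_smul]
    simp
  have h3 := Finset.sum_comm (s := Finset.univ) (t := Finset.univ)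
    (f := fun (v : Fˣ) (c : Lˣ) => traceIndicator K F (algebraMap L F c * v ^ 2))
  simp only [h1, h2, Finset.sum_const, nsmul_eq_mul, Finset.card_univ, Fintype.card_units] at h3
  rw [sum_units_eq_sum (fun v : F => traceIndicator K F (v ^ 2)) (by simp),
    ← Nat.card_eq_fintype_card, ← Nat.card_eq_fintype_card, hcard] at h3
  have h4 := card_mul_sum_traceIndicator (K := K) (F := L)
  have hL : 1 < Nat.card L := Finite.one_lt_card
  rw [Nat.cast_sub (Nat.one_le_pow _ _ (by omega)), Nat.cast_sub hL.le] at h3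
  push_cast at h3
  have hne : (Nat.card L : ℤ) - 1 ≠ 0 := by
    have : (1 : ℤ) < Nat.card L := by exact_mod_cast hL
    omega
  refine mul_left_cancel₀ hne ?_
  linear_combination (-(Nat.card K : ℤ)) * h3 + ((Nat.card L : ℤ) ^ 2 - 1) * h4

end Quadratic

/-- A finite extension of finite fields of even degree has a quadratic subextension. -/
theorem exists_intermediateField_finrank_eq_two {K F : Type*} [Field K] [Field F] [Algebra K F]
    [Finite F] (h : Even (Module.finrank K F)) :
    ∃ L : IntermediateField K F, Module.finrank L F = 2 := by
  have : Finite K := Finite.of_injective _ (algebraMap K F).injective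
  have : Fact (Nat.Prime 2) := ⟨Nat.prime_two⟩
  obtain ⟨σ, hσ⟩ := exists_prime_orderOf_dvd_card' (G := F ≃ₐ[K] F) 2
    (by rw [IsGalois.card_aut_eq_finrank]; exact h.two_dvd)
  refine ⟨IntermediateField.fixedField (Subgroup.zpowers σ), ?_⟩
  rw [IntermediateField.finrank_fixedField_eq_card, Nat.card_zpowers, hσ]

/-- A sum over a full period repeated `N` times. -/
theorem sum_range_mul_of_periodic {M : Type*} [AddCommMonoid M] (g : ℕ → M) (n N : ℕ)
    (hg : Function.Periodic g n) :
    ∑ k ∈ Finset.range (n * N), g k = N • ∑ k ∈ Finset.range n, g k := by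
  induction N with
  | zero => simp
  | succ N ih =>
    rw [Nat.mul_succ, Finset.sum_range_add, ih, succ_nsmul]
    congr 1
    refine Finset.sum_congr rfl fun k _ => ?_
    rw [add_comm, mul_comm]
    exact hg.nat_mul N k

theorem mul_hammingNorm_eq_sum_units {K F : Type*} [Field K] [Field F] [Algebra K F] [Fintype F]
    [Fintype Fˣ] [DecidableEq K] {n N : ℕ} [NeZero n] (hnN : n * N = Fintype.card Fˣ) {η : Fˣ}
    (hη : ∀ x : Fˣ, x ∈ Subgroup.zpowers η) (a : F) :
    (N : ℤ) * hammingNorm (fun j : ZMod n => Algebra.trace K F (a * (η : F) ^ (N * j.val))) =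
      ∑ u : Fˣ, traceIndicator K F (a * u ^ N) := by
  classical
  have ho : orderOf η = n * N := by
    rw [hnN, ← Nat.card_eq_fintype_card]
    exact orderOf_eq_card_of_forall_mem_zpowers hη
  have h1 : ∑ u : Fˣ, traceIndicator K F (a * u ^ N) =
      ∑ k ∈ Finset.range (n * N), traceIndicator K F (a * (η : F) ^ (N * k)) := by
    rw [← IsCyclic.image_range_orderOf hη, Finset.sum_image, ho]
    · refine Finset.sum_congr rfl fun k _ => ?_
      rw [Units.val_pow_eq_pow_val, ← pow_mul, mul_comm k]
    · intro i hi j hj hij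
      simp only [Finset.coe_range, Set.mem_Iio] at hi hj
      exact pow_injOn_Iio_orderOf hi hj hij
  rw [h1, sum_range_mul_of_periodic, nsmul_eq_mul]
  · congr 1
    rw [hammingNorm, Finset.card_filter, Nat.cast_sum, Finset.sum_range]
    refine Fintype.sum_equiv (ZMod.finEquiv n).symm.toEquiv _ _ fun j => ?_
    have : j.val = ((ZMod.finEquiv n).symm.toEquiv j : ℕ) := by
      obtain ⟨m, rfl⟩ := Nat.exists_eq_succ_of_ne_zero (NeZero.ne n)
      rfl
    rw [← this]
    unfold traceIndicator
    split_ifs <;> simp_all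
  · intro k
    have : (η : F) ^ (N * n) = 1 := by
      rw [← Units.val_pow_eq_pow_val, mul_comm, ← ho, pow_orderOf_eq_one, Units.val_one]
    simp only [mul_add, pow_add, this, mul_one]


open Classical in
/-- The Hamming weight of `c(a) = (Tr(a η^{jN}))_{j=0}^{n-1}` for `p ≡ 1 (mod 4)`:
it equals `(1/N)(q^r - (q^r - (q-1)q^{r/2})/q)` when `a` is a nonzero square, and
`(1/N)(q^r - (q^r + (q-1)q^{r/2})/q)` when `a` is a non-square. -/
theorem hamming_weight_c_p1mod4 (p e q r N n : ℕ) (hp : p.Prime) (hpodd : Odd p)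
    (hp4 : p % 4 = 1) (he : 0 < e) (hqe : q = p ^ e)
    (hr : 2 ≤ r) (hre : Even r) (hN : 0 < N) [NeZero n]
    (hnN : n * N = q ^ r - 1)
    (hgcd : Nat.gcd ((q ^ r - 1) / (q - 1)) N = 2)
    (F : Type*) [Field F] [Fintype F] (hF : Fintype.card F = q ^ r)
    (K : Subfield F) (hK : Nat.card K = q)
    (η : Fˣ) (hη : ∀ x : Fˣ, x ∈ Subgroup.zpowers η)
    (a : F) (ha : a ≠ 0) :
    (IsSquare a →
      ((hammingNorm (fun j : ZMod n =>
          Algebra.trace ↥K F (a * (η : F) ^ (N * j.val)))) : ℚ) =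
        (1 / (N : ℚ)) *
          ((q : ℚ) ^ r - ((q : ℚ) ^ r - ((q : ℚ) - 1) * (q : ℚ) ^ (r / 2)) / q)) ∧
    (¬ IsSquare a →
      ((hammingNorm (fun j : ZMod n =>
          Algebra.trace ↥K F (a * (η : F) ^ (N * j.val)))) : ℚ) =
        (1 / (N : ℚ)) *
          ((q : ℚ) ^ r - ((q : ℚ) ^ r + ((q : ℚ) - 1) * (q : ℚ) ^ (r / 2)) / q)) := by
  have : Finite K := inferInstance
  have hp2 : 1 < p := hp.one_lt
  have hq4 : q % 4 = 1 := by simp [hqe, Nat.pow_mod, hp4]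
  have hq1 : 1 < q := by rw [hqe]; exact Nat.one_lt_pow he.ne' hp2
  have hcF : Nat.card F = q ^ r := by rw [Nat.card_eq_fintype_card, hF]
  have hrank : Module.finrank K F = r := by
    have := Module.natCard_eq_pow_finrank (K := K) (V := F)
    rw [hcF, hK] at this
    exact (Nat.pow_right_injective hq1 this).symm
  obtain ⟨L, hL⟩ := exists_intermediateField_finrank_eq_two (K := K) (F := F) (hrank ▸ hre)
  obtain ⟨s, hs⟩ := hre.two_dvd
  have hs2 : r / 2 = s := by omega
  have hcL : Nat.card L = q ^ s := by
    have := card_eq_sq_of_finrank_eq_two hL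
    rw [hcF, hs, mul_comm, pow_mul] at this
    exact (Nat.pow_left_injective two_ne_zero this).symm
  have hL4 : Nat.card L % 4 = 1 := by rw [hcL]; simp [Nat.pow_mod, hq4]
  have hsq := sum_traceIndicator_sq (K := K) hL hL4
  have hall := card_mul_sum_traceIndicator (K := K) (F := F)
  have hwt := mul_hammingNorm_eq_sum_units (K := K)
    (by rw [hnN, Fintype.card_units, hF]) hη a
  rw [sum_traceIndicator_mul_pow (by rwa [hcF, hK]),
    sum_units_eq_sum (fun v : F => traceIndicator K F (a * v ^ 2)) (by simp)] at hwt
  rw [hK, hcL] at hsq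
  rw [hK, hcF] at hall
  have hNQ : (N : ℚ) ≠ 0 := by exact_mod_cast hN.ne'
  have hqQ : (q : ℚ) ≠ 0 := by exact_mod_cast (by omega : q ≠ 0)
  have hqr : (q : ℚ) ^ r = ((q : ℚ) ^ s) ^ 2 := by rw [hs, mul_comm, pow_mul]
  have hqrZ : (q : ℤ) ^ r = ((q : ℤ) ^ s) ^ 2 := by rw [hs, mul_comm, pow_mul]
  rw [hs2, hqr]
  push_cast at hsq hall
  rw [hqrZ] at hall
  constructor
  · rintro ⟨b, rfl⟩
    have hb : b ≠ 0 := fun h => ha (by simp [h])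
    have hab : ∑ v : F, traceIndicator K F (b * b * v ^ 2) = ∑ v : F, traceIndicator K F (v ^ 2) :=
      Fintype.sum_equiv (Equiv.mulLeft₀ b hb) _ _ fun v => by
        simp only [Equiv.mulLeft₀_apply]
        congr 1
        ring
    rw [hab] at hwt
    rw [← hwt] at hsq
    have hsqQ := congrArg (Int.cast : ℤ → ℚ) hsq
    push_cast at hsqQ
    simp only [← pow_two b] at hsqQ ⊢
    field_simp
    linear_combination hsqQ
  · intro hna
    have h2 : ringChar F ≠ 2 := by
      rw [Ne, FiniteField.even_card_iff_char_two, hF, Nat.pow_mod]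
      have : q % 2 = 1 := by omega
      simp [this]
    have hsum := sum_sq_add_sum_mul_sq h2 (traceIndicator K F) hna
    rw [← hwt] at hsum
    have hfin : (q : ℤ) * (N * hammingNorm (fun j : ZMod n =>
        Algebra.trace K F (a * (η : F) ^ (N * j.val)))) =
        2 * (((q : ℤ) ^ s) ^ 2 * (q - 1)) - q ^ s * (q ^ s + 1) * (q - 1) := by
      linear_combination (q : ℤ) * hsum + 2 * hall - hsq
    have hfinQ := congrArg (Int.cast : ℤ → ℚ) hfin
    push_cast at hfinQ
    field_simp
    linear_combination hfinQ
end
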